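/- Let F be the free group of rank r ≥ 1 with free basis S, and for g ∈ F let |g| denote the length of the reduced word representing g. Let K ≥ 0 and let Q ≤ F be a K-quasiconvex subgroup with respect to S. Then for every n ∈ ℕ and every g ∈ F − Q with |g| ≤ n, there exists a subgroup H ≤ F with Q ≤ H, g ∉ H, and [F : H] ≤ (2r)^K + n. That is, the separability growth of F with respect to the class 𝒬_K of K-quasiconvex subgroups satisfies Sep^{𝒬_K}_{F,S}(Q, n) ≤ (2r)^K + n. -/

import Mathlib

/-- The word length of `g` with respect to a generating set `S`: the least `n` such that
`g` is a product of `n` elements of `S ∪ S⁻¹`.  For the free group with free basis `S`,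
this is the length of the reduced word representing `g`. -/
noncomputable def wordLength {G : Type*} [Group G] (S : Set G) (g : G) : ℕ :=
  sInf {n : ℕ | ∃ w : List G, (∀ x ∈ w, x ∈ S ∨ x⁻¹ ∈ S) ∧ w.length = n ∧ w.prod = g}

/-- A subgroup `Q` is `K`-quasiconvex with respect to `S` if for every `q ∈ Q` and every
minimal-length expression of `q` as a word in `S ∪ S⁻¹`, every prefix product of that word
lies at word-metric distance at most `K` from `Q`. -/
def IsQuasiconvex {G : Type*} [Group G] (S : Set G) (Q : Subgroup G) (K : ℕ) : Prop :=
  ∀ w : List G, (∀ x ∈ w, x ∈ S ∨ x⁻¹ ∈ S) → w.prod ∈ Q →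
    w.length = wordLength S w.prod →
    ∀ j : ℕ, ∃ h ∈ Q, wordLength S ((w.take j).prod⁻¹ * h) ≤ K

/-- `D_F^{Ω_Q}(g)`: the minimal index of a subgroup containing `Q` but not `g`
(`∞` if no such finite-index subgroup exists). -/
noncomputable def sepDiv {G : Type*} [Group G] (Q : Subgroup G) (g : G) : ℕ∞ :=
  sInf ((fun Δ : Subgroup G => (Δ.index : ℕ∞)) ''
    {Δ : Subgroup G | Q ≤ Δ ∧ g ∉ Δ ∧ Δ.index ≠ 0})

/-- The separability growth function `Sep_{G,S}^{𝒬}(Q,n)`. -/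
noncomputable def sepGrowth {G : Type*} [Group G] (S : Set G) (Q : Subgroup G) (n : ℕ) : ℕ∞ :=
  sSup (sepDiv Q '' {g : G | g ∉ Q ∧ wordLength S g ≤ n})

/-!
Let `B` be the ball of radius `K` in `F`. Inverting the tail of a word turns quasiconvexity into
the statement that reading a geodesic word of `Q` from right to left, starting at the trivial coset
in `F ⧸ Q`, never leaves the image of `B`. Let `T` be the image in `F ⧸ Q` of `B` together with the
suffixes of a geodesic word for `g`. Each basis element acts on `F ⧸ Q` by a permutation, hence
restricts to a partial injection of the finite set `T`, and this can be completed to a permutation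
of `T`. As `F` is free, these permutations define an action of `F` on `T`, in which the trivial
coset is still fixed by `Q` and still moved by `g`; its stabilizer has index at most `|T|`.
-/

open scoped Pointwise

section WordLength

variable {G : Type*} [Group G] {S : Set G}

theorem wordLength_prod_le_length {w : List G} (hw : ∀ x ∈ w, x ∈ S ∪ S⁻¹) :
    wordLength S w.prod ≤ w.length :=
  Nat.sInf_le ⟨w, hw, rfl, rfl⟩

theorem exists_prod_eq_and_length_eq_wordLength (hS : Subgroup.closure S = ⊤) (g : G) :
    ∃ w : List G, (∀ x ∈ w, x ∈ S ∪ S⁻¹) ∧ w.prod = g ∧ w.length = wordLength S g := by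
  have hg : g ∈ Submonoid.closure (S ∪ S⁻¹) := by
    rw [← Subgroup.closure_toSubmonoid, hS]
    exact Subgroup.mem_top g
  obtain ⟨w, hw, hprod⟩ := Submonoid.exists_list_of_mem_closure hg
  obtain ⟨v, hv, hlength, hvprod⟩ := Nat.sInf_mem
    (s := {n | ∃ w : List G, (∀ x ∈ w, x ∈ S ∨ x⁻¹ ∈ S) ∧ w.length = n ∧ w.prod = g})
    ⟨w.length, w, hw, rfl, hprod⟩
  exact ⟨v, hv, hvprod, hlength⟩

/-- The closed ball of radius `K` about the identity for the word metric of `S`. -/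
def wordBall (S : Set G) (K : ℕ) : Set G :=
  {g | wordLength S g ≤ K}

theorem prod_mem_wordBall {w : List G} {K : ℕ} (hw : ∀ x ∈ w, x ∈ S ∪ S⁻¹)
    (hK : w.length ≤ K) : w.prod ∈ wordBall S K :=
  (wordLength_prod_le_length hw).trans hK

theorem one_mem_wordBall (K : ℕ) : (1 : G) ∈ wordBall S K :=
  prod_mem_wordBall (w := []) (by simp) (Nat.zero_le K)

theorem mem_wordBall_of_mem {x : G} {K : ℕ} (hx : x ∈ S ∪ S⁻¹) (hK : 0 < K) :
    x ∈ wordBall S K := by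
  simpa using prod_mem_wordBall (w := [x]) (by simpa using hx) hK

theorem wordBall_zero (hS : Subgroup.closure S = ⊤) : wordBall S 0 = {1} := by
  refine Set.Subset.antisymm (fun g hg => ?_) (Set.singleton_subset_iff.2 (one_mem_wordBall 0))
  obtain ⟨w, -, rfl, hlength⟩ := exists_prod_eq_and_length_eq_wordLength hS g
  rw [List.length_eq_zero_iff.1 (hlength.trans (Nat.le_zero.1 hg))]
  rfl

theorem wordBall_succ_sdiff_one_subset (hS : Subgroup.closure S = ⊤) (K : ℕ) :
    wordBall S (K + 1) \ {1} ⊆ ⋃ x ∈ S ∪ S⁻¹, x • (wordBall S K \ {x⁻¹}) := by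
  rintro g ⟨hg, hne⟩
  obtain ⟨_ | ⟨x, w⟩, hw, rfl, hlength⟩ := exists_prod_eq_and_length_eq_wordLength hS g
  · exact absurd rfl hne
  rw [List.forall_mem_cons] at hw
  have hwK : w.length ≤ K := Nat.succ_le_succ_iff.1 (hlength.trans_le hg)
  refine Set.mem_biUnion hw.1 ⟨w.prod, ⟨prod_mem_wordBall hw.2 hwK, ?_⟩, List.prod_cons.symm⟩
  rintro h : w.prod = x⁻¹
  exact hne (by simp [h])

theorem finite_wordBall (hS : Subgroup.closure S = ⊤) (hfin : S.Finite) (K : ℕ) :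
    (wordBall S K).Finite := by
  induction K with
  | zero => simp [wordBall_zero hS]
  | succ K ih =>
    refine Set.Finite.of_sdiff (Set.Finite.subset ?_ (wordBall_succ_sdiff_one_subset hS K))
      (Set.finite_singleton 1)
    exact (hfin.union hfin.inv).biUnion fun x _ => ih.sdiff.smul_set

theorem ncard_biUnion_smul_le {X : Type*} [MulAction G X] {L : Set G} (hL : L.Finite)
    {A : G → Set X} {m : ℕ} (hA : ∀ x ∈ L, (A x).ncard ≤ m) :
    (⋃ x ∈ L, x • A x).ncard ≤ L.ncard * m := by
  have hle := hL.toFinset.set_ncard_biUnion_le fun x => x • A x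
  simp only [Set.Finite.mem_toFinset, Set.ncard_smul_set] at hle
  rw [Set.ncard_eq_toFinset_card _ hL]
  exact hle.trans (Finset.sum_le_card_nsmul _ _ _ (by simpa using hA))

theorem ncard_wordBall_le (hS : Subgroup.closure S = ⊤) (hfin : S.Finite) (K : ℕ) :
    (wordBall S K).ncard ≤ (S ∪ S⁻¹).ncard ^ K + min K 1 := by
  have hletters : (S ∪ S⁻¹).Finite := hfin.union hfin.inv
  induction K with
  | zero => simp [wordBall_zero hS]
  | succ K ih =>
    -- Removing `x⁻¹` cancels the extra point before multiplying by the number of letters.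
    have hpunctured : ∀ x ∈ S ∪ S⁻¹, (wordBall S K \ {x⁻¹}).ncard ≤ (S ∪ S⁻¹).ncard ^ K := by
      intro x hx
      obtain rfl | hK := K.eq_zero_or_pos
      · exact (Set.ncard_le_ncard Set.sdiff_subset (finite_wordBall hS hfin 0)).trans ih
      · have hx' : x⁻¹ ∈ wordBall S K :=
          mem_wordBall_of_mem (by simpa [or_comm] using hx) hK
        rw [Set.ncard_sdiff_singleton_of_mem hx']
        omega
    calc (wordBall S (K + 1)).ncard
        = (wordBall S (K + 1) \ {1}).ncard + 1 :=
          (Set.ncard_sdiff_singleton_add_one (one_mem_wordBall _)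
            (finite_wordBall hS hfin _)).symm
      _ ≤ (⋃ x ∈ S ∪ S⁻¹, x • (wordBall S K \ {x⁻¹})).ncard + 1 := by
        gcongr
        · exact hletters.biUnion fun x _ => (finite_wordBall hS hfin K).sdiff.smul_set
        · exact wordBall_succ_sdiff_one_subset hS K
      _ ≤ (S ∪ S⁻¹).ncard ^ (K + 1) + min (K + 1) 1 := by
        have hunion := ncard_biUnion_smul_le hletters hpunctured
        rw [pow_succ']
        omega

theorem exists_wordBall_subset_and_prod_drop_mem (hS : Subgroup.closure S = ⊤) (hfin : S.Finite)
    {w : List G} (hw : ∀ x ∈ w, x ∈ S ∪ S⁻¹) (hne : w ≠ []) (K : ℕ) :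
    ∃ V : Set G, V.Finite ∧ V.ncard ≤ (S ∪ S⁻¹).ncard ^ K + w.length ∧
      wordBall S K ⊆ V ∧ ∀ j, (w.drop j).prod ∈ V := by
  let longSuffixes : Set G := (fun j => (w.drop j).prod) '' Set.Iio (w.length - K)
  have hlong : longSuffixes.Finite := (Set.finite_Iio _).image _
  refine ⟨wordBall S K ∪ longSuffixes, (finite_wordBall hS hfin K).union hlong, ?_,
    Set.subset_union_left, fun j => ?_⟩
  · -- The extra point `min K 1` of the ball is absorbed by the suffixes short enough to lie in it.
    have hball := ncard_wordBall_le hS hfin K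
    have hsuffixes : longSuffixes.ncard ≤ w.length - K :=
      (Set.ncard_image_le (Set.finite_Iio _)).trans_eq (Set.ncard_Iio_nat _)
    have hunion := Set.ncard_union_le (wordBall S K) longSuffixes
    have hpos := List.length_pos_iff.2 hne
    omega
  · obtain hj | hj := lt_or_ge j (w.length - K)
    · exact Or.inr ⟨j, hj, rfl⟩
    · refine Or.inl (prod_mem_wordBall (fun x hx => hw x (List.mem_of_mem_drop hx)) ?_)
      rw [List.length_drop]
      omega

end WordLength

theorem IsQuasiconvex.exists_mem_wordBall_mk_eq_mk_prod_drop {G : Type*} [Group G] {S : Set G}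
    {Q : Subgroup G} {K : ℕ} (hQ : IsQuasiconvex S Q K) {w : List G}
    (hw : ∀ x ∈ w, x ∈ S ∪ S⁻¹) (hwQ : w.prod ∈ Q) (hlength : w.length = wordLength S w.prod)
    (j : ℕ) : ∃ b ∈ wordBall S K, (b : G ⧸ Q) = (w.drop j).prod := by
  obtain ⟨h, hhQ, hhK⟩ := hQ w hw hwQ hlength j
  refine ⟨_, hhK, QuotientGroup.eq.2 ?_⟩
  have hprod : ((w.take j).prod⁻¹ * h)⁻¹ * (w.drop j).prod = h⁻¹ * w.prod := by
    rw [← List.prod_take_mul_prod_drop w j]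
    group
  rw [hprod]
  exact Q.mul_mem (Q.inv_mem hhQ) hwQ

section PartialAction

variable {ι G X : Type*} [Group G] [MulAction G X]

theorem exists_perm_extending_smul (T : Set X) [Finite T] (g : G) :
    ∃ e : Equiv.Perm T, ∀ x y : T, g • (x : X) = y → e x = y := by
  let s : {x : T // g • (x : X) ∈ T} → T := fun x => ⟨g • (x : X), x.2⟩
  have hs : Function.Injective s := fun x y hxy =>
    Subtype.ext (Subtype.ext (MulAction.injective g (congrArg Subtype.val hxy)))
  obtain ⟨e, he⟩ := Equiv.Perm.exists_extending_pair Subtype.val s Subtype.val_injective hs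
  refine ⟨e, fun x y hxy => ?_⟩
  exact (he ⟨x, hxy ▸ y.2⟩).trans (Subtype.ext hxy)

theorem exists_hom_perm_of_freeGroupBasis (b : FreeGroupBasis ι G) (T : Set X) [Finite T] :
    ∃ φ : G →* Equiv.Perm T, ∀ g ∈ Set.range b ∪ (Set.range b)⁻¹, ∀ x y : T,
      g • (x : X) = y → φ g x = y := by
  choose e he using fun i => exists_perm_extending_smul T (b i)
  have hbasis : ∀ i, b.lift e (b i) = e i := fun i => by simp
  refine ⟨b.lift e, ?_⟩
  rintro g (⟨i, rfl⟩ | ⟨i, hi⟩) x y hxy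
  · rw [hbasis]
    exact he i x y hxy
  · obtain rfl : (b i)⁻¹ = g := by rw [hi, inv_inv]
    rw [map_inv, hbasis, Equiv.Perm.inv_eq_iff_eq]
    exact (he i y x (by rw [← hxy, smul_inv_smul])).symm

theorem coe_hom_perm_prod_apply {S : Set G} {T : Set X} {φ : G →* Equiv.Perm T}
    (hφ : ∀ g ∈ S, ∀ x y : T, g • (x : X) = y → φ g x = y) {w : List G} (hw : ∀ g ∈ w, g ∈ S)
    (x : T) (hx : ∀ j, (w.drop j).prod • (x : X) ∈ T) :
    (φ w.prod x : X) = w.prod • (x : X) := by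
  induction w with
  | nil => simp
  | cons g w ih =>
    rw [List.forall_mem_cons] at hw
    have htail : (φ w.prod x : X) = w.prod • (x : X) := ih hw.2 fun j => hx (j + 1)
    have hmem : g • w.prod • (x : X) ∈ T := by simpa [mul_smul] using hx 0
    have hhead : φ g (φ w.prod x) = ⟨g • w.prod • (x : X), hmem⟩ :=
      hφ g hw.1 _ _ (by rw [htail])
    rw [List.prod_cons, map_mul, Equiv.Perm.mul_apply, hhead, mul_smul]

theorem exists_index_le_ncard_and_prod_mem_iff_smul_eq (b : FreeGroupBasis ι G) {T : Set X}
    (hT : T.Finite) {x : X} (hx : x ∈ T) :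
    ∃ H : Subgroup G, 0 < H.index ∧ H.index ≤ T.ncard ∧
      ∀ w : List G, (∀ g ∈ w, g ∈ Set.range b ∪ (Set.range b)⁻¹) →
        (∀ j, (w.drop j).prod • x ∈ T) → (w.prod ∈ H ↔ w.prod • x = x) := by
  have : Finite T := hT
  obtain ⟨φ, hφ⟩ := exists_hom_perm_of_freeGroupBasis b T
  let : MulAction G T := MulAction.compHom T φ
  refine ⟨MulAction.stabilizer G (⟨x, hx⟩ : T), ?_, ?_, fun w hw hwT => ?_⟩
  · rw [MulAction.index_stabilizer, Set.ncard_pos]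
    exact MulAction.nonempty_orbit _
  · rw [MulAction.index_stabilizer]
    exact Set.ncard_le_card _
  · rw [MulAction.mem_stabilizer_iff, ← coe_hom_perm_prod_apply hφ hw ⟨x, hx⟩ hwT]
    exact Subtype.ext_iff

end PartialAction

section Separability

variable {ι G : Type*} [Group G] {S : Set G} {Q : Subgroup G} {K : ℕ}

theorem sepDiv_le_index {g : G} {H : Subgroup G} (hQ : Q ≤ H) (hg : g ∉ H) (hH : H.index ≠ 0) :
    sepDiv Q g ≤ H.index :=
  sInf_le ⟨H, ⟨hQ, hg, hH⟩, rfl⟩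

theorem sepGrowth_le {n N : ℕ}
    (h : ∀ g ∉ Q, wordLength S g ≤ n →
      ∃ H : Subgroup G, Q ≤ H ∧ g ∉ H ∧ 0 < H.index ∧ H.index ≤ N) :
    sepGrowth S Q n ≤ N := by
  refine sSup_le ?_
  rintro _ ⟨g, ⟨hg, hn⟩, rfl⟩
  obtain ⟨H, hQH, hgH, hpos, hle⟩ := h g hg hn
  exact (sepDiv_le_index hQH hgH hpos.ne').trans (Nat.cast_le.2 hle)

theorem closure_range_freeGroupBasis (b : FreeGroupBasis ι G) :
    Subgroup.closure (Set.range b) = ⊤ := by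
  have hrange : Set.range b = b.repr.symm.toMonoidHom '' Set.range FreeGroup.of :=
    Set.range_comp b.repr.symm FreeGroup.of
  rw [hrange, ← MonoidHom.map_closure, FreeGroup.closure_range_of]
  exact Subgroup.map_top_of_surjective _ b.repr.symm.surjective

theorem ncard_range_union_inv_le (b : FreeGroupBasis ι G) :
    (Set.range b ∪ (Set.range b)⁻¹).ncard ≤ 2 * Nat.card ι := by
  refine (Set.ncard_union_le _ _).trans_eq ?_
  rw [Set.ncard_inv, Set.ncard_range_of_injective b.injective, two_mul]

theorem exists_separating_subgroup [Finite ι] (b : FreeGroupBasis ι G)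
    (hQ : IsQuasiconvex (Set.range b) Q K) {g : G} (hg : g ∉ Q) :
    ∃ H : Subgroup G, Q ≤ H ∧ g ∉ H ∧ 0 < H.index ∧
      H.index ≤ (2 * Nat.card ι) ^ K + wordLength (Set.range b) g := by
  have hb := closure_range_freeGroupBasis b
  obtain ⟨w, hw, rfl, hlength⟩ := exists_prod_eq_and_length_eq_wordLength hb g
  have hne : w ≠ [] := fun h => hg (by simp [h, Q.one_mem])
  obtain ⟨V, hVfin, hVcard, hball, hsuffix⟩ :=
    exists_wordBall_subset_and_prod_drop_mem hb (Set.finite_range b) hw hne K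
  let T : Set (G ⧸ Q) := (↑) '' V
  have hbase : ((1 : G) : G ⧸ Q) ∈ T := Set.mem_image_of_mem _ (hball (one_mem_wordBall K))
  obtain ⟨H, hpos, hindex, hH⟩ :=
    exists_index_le_ncard_and_prod_mem_iff_smul_eq b (hVfin.image _) hbase
  have hHQ {v : List G} (hv : ∀ x ∈ v, x ∈ Set.range b ∪ (Set.range b)⁻¹)
      (hvT : ∀ j, ((v.drop j).prod : G ⧸ Q) ∈ T) : v.prod ∈ H ↔ v.prod ∈ Q := by
    have hvT' : ∀ j, (v.drop j).prod • ((1 : G) : G ⧸ Q) ∈ T := by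
      simpa only [MulAction.Quotient.smul_coe, smul_eq_mul, mul_one] using hvT
    rw [hH v hv hvT', ← MulAction.mem_stabilizer_iff, MulAction.stabilizer_quotient]
  refine ⟨H, fun q hq => ?_, ?_, hpos, ?_⟩
  · obtain ⟨v, hv, rfl, hvlength⟩ := exists_prod_eq_and_length_eq_wordLength hb q
    refine (hHQ hv fun j => ?_).2 hq
    obtain ⟨u, hu, huv⟩ := hQ.exists_mem_wordBall_mk_eq_mk_prod_drop hv hq hvlength j
    exact huv ▸ Set.mem_image_of_mem _ (hball hu)
  · exact fun hgH => hg ((hHQ hw fun j => Set.mem_image_of_mem _ (hsuffix j)).1 hgH)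
  · calc H.index ≤ V.ncard := hindex.trans (Set.ncard_image_le hVfin)
      _ ≤ (Set.range b ∪ (Set.range b)⁻¹).ncard ^ K + w.length := hVcard
      _ ≤ (2 * Nat.card ι) ^ K + wordLength (Set.range b) w.prod := by
        rw [hlength]
        gcongr
        exact ncard_range_union_inv_le b

theorem free_group_separability_growth_general [Finite ι] (b : FreeGroupBasis ι G)
    (hQ : IsQuasiconvex (Set.range b) Q K) :
    (∀ (n : ℕ) (g : G), g ∉ Q → wordLength (Set.range b) g ≤ n →
      ∃ H : Subgroup G, Q ≤ H ∧ g ∉ H ∧ 0 < H.index ∧ H.index ≤ (2 * Nat.card ι) ^ K + n) ∧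
    (∀ n : ℕ, sepGrowth (Set.range b) Q n ≤ (((2 * Nat.card ι) ^ K + n : ℕ) : ℕ∞)) := by
  have hsep (n : ℕ) (g : G) (hg : g ∉ Q) (hn : wordLength (Set.range b) g ≤ n) :
      ∃ H : Subgroup G, Q ≤ H ∧ g ∉ H ∧ 0 < H.index ∧
        H.index ≤ (2 * Nat.card ι) ^ K + n := by
    obtain ⟨H, hQH, hgH, hpos, hle⟩ := exists_separating_subgroup b hQ hg
    exact ⟨H, hQH, hgH, hpos, hle.trans (by gcongr)⟩
  exact ⟨hsep, fun n => sepGrowth_le (hsep n)⟩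

end Separability

/-- Quantified separability of `K`-quasiconvex subgroups of the free group `F` of rank
`r ≥ 1` with free basis `S = {of i}`: every `g ∈ F − Q` with `|g| ≤ n` is separated from
`Q` by a subgroup of index at most `(2r)^K + n`; that is,
`Sep^{𝒬_K}_{F,S}(Q,n) ≤ (2r)^K + n`. -/
theorem free_group_separability_growth
    (r : ℕ) (hr : 1 ≤ r) (K : ℕ) (Q : Subgroup (FreeGroup (Fin r)))
    (hQ : IsQuasiconvex (Set.range (FreeGroup.of : Fin r → FreeGroup (Fin r))) Q K) :
    (∀ (n : ℕ) (g : FreeGroup (Fin r)), g ∉ Q →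
      wordLength (Set.range (FreeGroup.of : Fin r → FreeGroup (Fin r))) g ≤ n →
      ∃ H : Subgroup (FreeGroup (Fin r)), Q ≤ H ∧ g ∉ H ∧
        0 < H.index ∧ H.index ≤ (2 * r) ^ K + n) ∧
    (∀ n : ℕ,
      sepGrowth (Set.range (FreeGroup.of : Fin r → FreeGroup (Fin r))) Q n ≤
        (((2 * r) ^ K + n : ℕ) : ℕ∞)) := by
  have h := free_group_separability_growth_general (FreeGroupBasis.ofFreeGroup (Fin r)) hQ
  rw [Nat.card_fin] at h
  exact h
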